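/- For every complex number q with 0 < |q| < 1, one has ∑_{i,j,k,l ≥ 0} q^{i²+j²+k²+l²+il−jl−kl−i+j−k} / ((q²;q²)_i (q²;q²)_j (q²;q²)_k (q²;q²)_l) = 4 J_4³ J_{12,28} / J_2⁴ + J_2⁶ J_14 J_28⁵ / (J_1³ J_4³ J_{1,28} J_{4,28} J_{7,28} J_{10,28} J_{12,28} J_{13,28}). -/

import Mathlib

open scoped BigOperators

/-- The infinite q-Pochhammer symbol `(a; q)_∞ = ∏_{k=0}^∞ (1 - a q^k)`. -/
noncomputable def qPochInf (a q : ℂ) : ℂ := ∏' n : ℕ, (1 - a * q ^ n)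

/-- The finite q-Pochhammer symbol `(a; q)_n = ∏_{k=0}^{n-1} (1 - a q^k)`. -/
noncomputable def qPoch (a q : ℂ) (n : ℕ) : ℂ :=
  Finset.prod (Finset.range n) (fun k => 1 - a * q ^ k)

/-- `J_m = (q^m; q^m)_∞`. -/
noncomputable def J (q : ℂ) (m : ℕ) : ℂ := qPochInf (q ^ m) (q ^ m)

/-- `J_{a,m} = (q^a; q^m)_∞ (q^{m-a}; q^m)_∞ (q^m; q^m)_∞`. -/
noncomputable def Jam (q : ℂ) (a m : ℕ) : ℂ :=
  qPochInf (q ^ a) (q ^ m) * qPochInf (q ^ (m - a)) (q ^ m) * qPochInf (q ^ m) (q ^ m)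


/-- inverse q-factorial extended by zero -/
noncomputable def qI (q : ℂ) (k : ℤ) : ℂ := if k < 0 then 0 else (qPoch q q k.toNat)⁻¹

/-- triangular numbers -/
def tri (n : ℤ) : ℤ := n * (n - 1) / 2

lemma two_tri (n : ℤ) : 2 * tri n = n * (n - 1) := by
  unfold tri
  have h : (2:ℤ) ∣ n * (n - 1) := by
    rcases Int.even_or_odd n with h | h
    · exact (h.two_dvd).mul_right _
    · have : Even (n - 1) := by grind
      exact (this.two_dvd).mul_left _
  omega

lemma one_sub_pow_ne {q : ℂ} (hq : ‖q‖ < 1) {n : ℕ} (hn : n ≠ 0) : 1 - q ^ n ≠ 0 := by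
  intro h
  have h2 : q ^ n = 1 := by linear_combination -h
  have h3 : ‖q‖ ^ n = 1 := by rw [← norm_pow, h2, norm_one]
  exact absurd h3 (pow_lt_one₀ (norm_nonneg _) hq hn).ne

lemma qPoch_succ (a q : ℂ) (n : ℕ) : qPoch a q (n+1) = qPoch a q n * (1 - a * q ^ n) := by
  simp [qPoch, Finset.prod_range_succ]

lemma qPoch_zero (a q : ℂ) : qPoch a q 0 = 1 := by simp [qPoch]

lemma qPoch_ne {q : ℂ} (hq : ‖q‖ < 1) (n : ℕ) : qPoch q q n ≠ 0 := by
  unfold qPoch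
  rw [Finset.prod_ne_zero_iff]
  intro k _
  rw [← pow_succ']
  exact one_sub_pow_ne hq (by simp)

lemma qI_nat (q : ℂ) (n : ℕ) : qI q n = (qPoch q q n)⁻¹ := by
  simp [qI]

lemma qI_neg (q : ℂ) {k : ℤ} (hk : k < 0) : qI q k = 0 := by
  simp [qI, hk]

lemma qI_zero (q : ℂ) : qI q 0 = 1 := by
  simp [qI, qPoch_zero]

lemma qI_rec {q : ℂ} (hq : ‖q‖ < 1) (k : ℤ) : qI q (k - 1) = (1 - q ^ k) * qI q k := by
  rcases lt_trichotomy k 0 with h | h | h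
  · rw [qI_neg q h, qI_neg q (by omega)]; simp
  · subst h; rw [qI_neg q (by omega)]; simp
  · obtain ⟨n, rfl⟩ : ∃ n : ℕ, k = n + 1 := ⟨(k-1).toNat, by omega⟩
    have : ((n:ℤ) + 1 - 1) = (n:ℤ) := by ring
    rw [this]
    have h2 : ((n:ℤ) + 1) = ((n+1 : ℕ):ℤ) := by push_cast; rfl
    rw [h2, qI_nat, qI_nat, qPoch_succ, zpow_natCast, ← pow_succ']
    have h3 := qPoch_ne hq n
    have h4 : 1 - q ^ (n+1) ≠ 0 := one_sub_pow_ne hq (by simp)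
    field_simp

lemma summable_geo (a : ℂ) {q : ℂ} (hq : ‖q‖ < 1) : Summable (fun n : ℕ => ‖- (a * q ^ n)‖) := by
  simp only [norm_neg, norm_mul, norm_pow]
  exact (summable_geometric_of_lt_one (norm_nonneg _) hq).mul_left _

lemma multip (a : ℂ) {q : ℂ} (hq : ‖q‖ < 1) : Multipliable (fun n : ℕ => 1 - a * q ^ n) := by
  have := multipliable_one_add_of_summable (summable_geo a hq)
  simpa [sub_eq_add_neg] using this

lemma tendsto_qPoch (a : ℂ) {q : ℂ} (hq : ‖q‖ < 1) :
    Filter.Tendsto (fun n => qPoch a q n) Filter.atTop (nhds (qPochInf a q)) :=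
  (multip a hq).tendsto_prod_tprod_nat

lemma qPochInf_ne {a q : ℂ} (hq : ‖q‖ < 1) (h : ∀ n : ℕ, 1 - a * q ^ n ≠ 0) :
    qPochInf a q ≠ 0 := by
  unfold qPochInf
  have := tprod_one_add_ne_zero_of_summable (f := fun n : ℕ => -(a * q ^ n))
    (by intro n; simpa [sub_eq_add_neg] using h n) (summable_geo a hq)
  simpa [sub_eq_add_neg] using this

lemma qPochInf_ne' {a q : ℂ} (hq : ‖q‖ < 1) (ha : ‖a‖ < 1) : qPochInf a q ≠ 0 := by
  apply qPochInf_ne hq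
  intro n h
  have h2 : a * q ^ n = 1 := by linear_combination -h
  have h3 : ‖a‖ * ‖q‖ ^ n = 1 := by rw [← norm_pow, ← norm_mul, h2, norm_one]
  have h4 : ‖q‖ ^ n ≤ 1 := pow_le_one₀ (norm_nonneg _) hq.le
  nlinarith [norm_nonneg a, norm_nonneg q]

lemma qPochInf_rec (a : ℂ) {q : ℂ} (hq : ‖q‖ < 1) :
    qPochInf a q = (1 - a) * qPochInf (a * q) q := by
  unfold qPochInf
  rw [tprod_eq_zero_mul' (by
    have := multip (a * q) hq
    refine this.congr ?_
    intro n; ring)]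
  simp only [pow_zero, mul_one]
  congr 1
  apply tprod_congr
  intro n; ring

lemma qI_bdd {q : ℂ} (hq : ‖q‖ < 1) : ∃ C : ℝ, 0 < C ∧ ∀ k : ℤ, ‖qI q k‖ ≤ C := by
  have h1 : Filter.Tendsto (fun n => ‖(qPoch q q n)⁻¹‖) Filter.atTop (nhds ‖(qPochInf q q)⁻¹‖) :=
    ((tendsto_qPoch q hq).inv₀ (qPochInf_ne' hq hq)).norm
  obtain ⟨C, hC⟩ := h1.bddAbove_range
  refine ⟨max C 1, by positivity, fun k => ?_⟩
  unfold qI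
  split_ifs with h
  · simp
  · exact le_trans (hC ⟨_, rfl⟩) (le_max_left _ _)

lemma tri_succ (n : ℤ) : tri (n+1) = tri n + n := by
  have h1 := two_tri n
  have h2 := two_tri (n+1)
  linarith

lemma tri_neg (n : ℤ) : tri (-n) = tri n + n := by
  have h1 := two_tri n
  have h2 := two_tri (-n)
  linarith

lemma summable_tri_nat {q z : ℂ} (hq0 : q ≠ 0) (hq : ‖q‖ < 1) (hz : z ≠ 0) :
    Summable (fun n : ℕ => ‖q ^ (tri n) * z ^ n‖) := by
  apply summable_of_ratio_test_tendsto_lt_one (l := 0) (by norm_num)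
  · filter_upwards with n
    simp [hq0, hz, zpow_ne_zero]
  · have h : ∀ n : ℕ, ‖‖q ^ (tri (n+1 : ℕ)) * z ^ (n+1)‖‖ / ‖‖q ^ (tri n) * z ^ n‖‖ = ‖q‖ ^ n * ‖z‖ := by
      intro n
      have hq0' : ‖q‖ ≠ 0 := by simpa using hq0
      have hz' : ‖z‖ ≠ 0 := by simpa using hz
      push_cast
      rw [tri_succ, zpow_add₀ hq0, pow_succ]
      simp only [norm_norm, norm_mul, norm_zpow, norm_pow, zpow_natCast]
      have := zpow_ne_zero (tri n) hq0'
      field_simp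
    simp_rw [h]
    have := (tendsto_pow_atTop_nhds_zero_of_lt_one (norm_nonneg q) hq).mul_const ‖z‖
    simpa using this

lemma summable_tri {q z : ℂ} (hq0 : q ≠ 0) (hq : ‖q‖ < 1) (hz : z ≠ 0) :
    Summable (fun n : ℤ => ‖q ^ (tri n) * z ^ n‖) := by
  apply Summable.of_nat_of_neg
  · simpa using summable_tri_nat hq0 hq hz
  · have := summable_tri_nat (z := q * z⁻¹) hq0 hq (by simp [hq0, hz])
    refine this.congr ?_
    intro n
    rw [tri_neg, zpow_add₀ hq0, mul_pow]
    simp [mul_assoc]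

/-- bounded times quadratic decay -/
lemma summable_tri_bdd {q z : ℂ} (hq0 : q ≠ 0) (hq : ‖q‖ < 1) (hz : z ≠ 0) (f : ℤ → ℂ) (C : ℝ)
    (hf : ∀ n, ‖f n‖ ≤ C) : Summable (fun n : ℤ => ‖q ^ (tri n) * z ^ n * f n‖) := by
  refine Summable.of_nonneg_of_le (fun n => norm_nonneg _) (fun n => ?_)
    ((summable_tri hq0 hq hz).mul_right C)
  rw [norm_mul _ (f n)]
  exact mul_le_mul_of_nonneg_left (hf n) (norm_nonneg _)

lemma tsum_shift (f : ℤ → ℂ) (c : ℤ) : ∑' n, f (n + c) = ∑' n, f n :=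
  (Equiv.addRight c).tsum_eq f

lemma tsum_int_nat (f : ℤ → ℂ) (hf : ∀ n < 0, f n = 0) : ∑' n : ℕ, f n = ∑' n : ℤ, f n := by
  apply Function.Injective.tsum_eq (f := f) (g := fun n : ℕ => (n:ℤ)) Nat.cast_injective
  intro n hn
  by_contra h
  apply hn
  apply hf
  by_contra h2
  exact h ⟨n.toNat, by simp; omega⟩

lemma norm_le_one_zpow {q : ℂ} (hq : ‖q‖ < 1) {n : ℤ} (hn : 0 ≤ n) : ‖q ^ n‖ ≤ 1 := by
  obtain ⟨k, rfl⟩ := Int.eq_ofNat_of_zero_le hn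
  rw [zpow_natCast, norm_pow]
  exact pow_le_one₀ (norm_nonneg _) hq.le

lemma euler_summable {q z : ℂ} (hq0 : q ≠ 0) (hq : ‖q‖ < 1) (hz : z ≠ 0) :
    Summable (fun n : ℤ => ‖q ^ (tri n) * z ^ n * qI q n‖) := by
  obtain ⟨C, _, hC⟩ := qI_bdd hq
  exact summable_tri_bdd hq0 hq hz _ C hC

lemma euler_step {q z : ℂ} (hq0 : q ≠ 0) (hq : ‖q‖ < 1) (hz : z ≠ 0) :
    ∑' n : ℤ, q ^ (tri n) * z ^ n * qI q n = (1 + z) * ∑' n : ℤ, q ^ (tri n) * (z * q) ^ n * qI q n := by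
  have s1 := (euler_summable hq0 hq hz).of_norm
  have s2 := (euler_summable hq0 hq (mul_ne_zero hz hq0)).of_norm
  have h1 : ∑' n : ℤ, q ^ (tri n) * z ^ n * qI q n - ∑' n : ℤ, q ^ (tri n) * (z * q) ^ n * qI q n
      = ∑' n : ℤ, q ^ (tri n) * z ^ n * qI q (n - 1) := by
    rw [← s1.tsum_sub s2]
    apply tsum_congr
    intro n
    rw [qI_rec hq, mul_zpow]
    ring
  have h2 : ∑' n : ℤ, q ^ (tri n) * z ^ n * qI q (n - 1) =
      z * ∑' n : ℤ, q ^ (tri n) * (z * q) ^ n * qI q n := by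
    rw [← tsum_shift _ 1, ← tsum_mul_left]
    apply tsum_congr
    intro n
    rw [tri_succ, zpow_add₀ hq0, zpow_add₀ hz, mul_zpow]
    simp only [add_sub_cancel_right, zpow_one]
    ring
  linear_combination h1 + h2

lemma euler_iter {q z : ℂ} (hq0 : q ≠ 0) (hq : ‖q‖ < 1) (hz : z ≠ 0) (N : ℕ) :
    ∑' n : ℤ, q ^ (tri n) * z ^ n * qI q n =
      qPoch (-z) q N * ∑' n : ℤ, q ^ (tri n) * (z * q ^ N) ^ n * qI q n := by
  induction N with
  | zero => simp [qPoch_zero]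
  | succ N ih =>
    rw [ih, euler_step hq0 hq (mul_ne_zero hz (pow_ne_zero N hq0)), qPoch_succ, pow_succ]
    ring_nf

lemma tri_zero : tri 0 = 0 := by simp [tri]

lemma euler {q z : ℂ} (hq0 : q ≠ 0) (hq : ‖q‖ < 1) (hz : z ≠ 0) :
    ∑' n : ℤ, q ^ (tri n) * z ^ n * qI q n = qPochInf (-z) q := by
  have h1 : Filter.Tendsto (fun N : ℕ => ∑' n : ℤ, q ^ (tri n) * (z * q ^ N) ^ n * qI q n)
      Filter.atTop (nhds (∑' n : ℤ, if n = 0 then 1 else 0)) := by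
    apply tendsto_tsum_of_dominated_convergence (euler_summable hq0 hq hz)
    · intro n
      split_ifs with h
      · subst h
        simp [tri_zero, qI_zero]
      · rcases lt_or_gt_of_ne h with h | h
        · simp [qI_neg q h]
        · obtain ⟨k, rfl⟩ : ∃ k : ℕ, n = k + 1 := ⟨(n-1).toNat, by omega⟩
          have h3 : ∀ N : ℕ, q ^ (tri (k+1)) * (z * q ^ N) ^ ((k:ℤ)+1) * qI q ((k:ℤ)+1)
            = q ^ (tri (k+1)) * z ^ (k+1) * qI q (k+1) * (q ^ N) ^ (k+1) := by
            intro N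
            rw [mul_zpow]
            norm_cast
            ring
          simp_rw [h3]
          have h4 := ((tendsto_pow_atTop_nhds_zero_of_norm_lt_one hq).pow (k+1)).const_mul
            (q ^ (tri (k+1)) * z ^ (k+1) * qI q (k+1))
          simpa using h4
    · filter_upwards with N n
      rcases lt_or_ge n 0 with h | h
      · simp [qI_neg q h]
      · have : ‖(q ^ N) ^ n‖ ≤ 1 := by
          rw [← zpow_natCast, ← zpow_mul]
          exact norm_le_one_zpow hq (by positivity)
        rw [mul_zpow]
        simp only [norm_mul] at *
        have h5 : 0 ≤ ‖q ^ tri n‖ * ‖z ^ n‖ * ‖qI q n‖ := by positivity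
        nlinarith
  have h2 := (tendsto_qPoch (-z) hq).mul h1
  have h3 := h2.congr (fun N => (euler_iter hq0 hq hz N).symm)
  have h4 := tendsto_nhds_unique h3 tendsto_const_nhds
  rw [← h4, tsum_ite_eq]
  simp

lemma summable_sq {q : ℂ} (hq0 : q ≠ 0) (hq : ‖q‖ < 1) (a : ℤ) (f : ℤ → ℂ) (C : ℝ)
    (hf : ∀ n, ‖f n‖ ≤ C) : Summable (fun m : ℤ => q ^ (m * m + a * m) * f m) := by
  have := (summable_tri_bdd (q := q ^ 2) (z := q ^ (a + 1)) (pow_ne_zero 2 hq0)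
    (by rw [norm_pow]; exact pow_lt_one₀ (norm_nonneg _) hq (by simp)) (zpow_ne_zero _ hq0) f C hf).of_norm
  refine this.congr ?_
  intro m
  congr 1
  rw [← zpow_natCast, ← zpow_mul, ← zpow_mul, ← zpow_add₀ hq0]
  congr 1
  have := two_tri m
  push_cast
  linear_combination this

/-- the Cauchy sum -/
noncomputable def qE (q : ℂ) (s : ℤ) : ℂ := ∑' m : ℤ, q ^ (m * m + s * m) * (qI q m * qI q (m + s))

lemma qII_bdd {q : ℂ} (hq : ‖q‖ < 1) : ∃ C : ℝ, 0 < C ∧ ∀ k l : ℤ, ‖qI q k * qI q l‖ ≤ C := by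
  obtain ⟨C, h0, hC⟩ := qI_bdd hq
  refine ⟨C * C, by positivity, fun k l => ?_⟩
  rw [norm_mul]
  exact mul_le_mul (hC k) (hC l) (norm_nonneg _) h0.le

lemma qE_summable {q : ℂ} (hq0 : q ≠ 0) (hq : ‖q‖ < 1) (s c d : ℤ) :
    Summable (fun m : ℤ => q ^ (m * m + s * m) * (qI q (m + c) * qI q (m + d))) := by
  obtain ⟨C, _, hC⟩ := qII_bdd hq
  exact summable_sq hq0 hq s _ C (fun m => hC _ _)

lemma qE_diff {q : ℂ} (hq0 : q ≠ 0) (hq : ‖q‖ < 1) (s : ℤ) :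
    qE q s - qE q (s+1) = - q ^ (s+1) * (qE q (s+1) - qE q (s+1+1)) := by
  have e1 : ∀ s, Summable (fun m : ℤ => q ^ (m * m + s * m) * (qI q m * qI q (m + s))) := by
    intro s; simpa using qE_summable hq0 hq s 0 s
  have sv : Summable (fun m : ℤ => q ^ (m * m + s * m) * (qI q (m - 1) * qI q (m + (s + 1)))) := by
    simpa [sub_eq_add_neg] using qE_summable hq0 hq s (-1) (s+1)
  have sb : Summable (fun m : ℤ => q ^ (s+1) * (q ^ (m * m + (s+1) * m) * (qI q m * qI q (m + (s + 1))))) :=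
    (e1 (s+1)).mul_left _
  have h1 : qE q s - qE q (s+1) = ∑' m : ℤ, q ^ (m * m + s * m) * (qI q (m - 1) * qI q (m + (s + 1)))
      - ∑' m : ℤ, q ^ (s+1) * (q ^ (m * m + (s+1) * m) * (qI q m * qI q (m + (s + 1)))) := by
    unfold qE
    rw [← (e1 s).tsum_sub (e1 (s+1)), ← sv.tsum_sub sb]
    apply tsum_congr
    intro m
    have r1 := qI_rec hq m
    have r2 := qI_rec hq (m + (s+1))
    rw [show m + (s+1) - 1 = m + s by ring] at r2
    rw [r1, r2]
    have x1 : q ^ (m * m + (s+1) * m) = q ^ (m * m + s * m) * q ^ m := by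
      rw [← zpow_add₀ hq0]; congr 1; ring
    rw [x1, zpow_add₀ hq0 m]
    ring
  have sv' : Summable (fun m : ℤ => q ^ ((m+1) * (m+1) + s * (m+1)) * (qI q (m + 1 - 1) * qI q (m + 1 + (s + 1)))) :=
    (Equiv.addRight (1:ℤ)).summable_iff.mpr sv
  rw [h1, ← tsum_shift _ 1, ← sv'.tsum_sub sb]
  unfold qE
  rw [← (e1 (s+1)).tsum_sub (e1 (s+1+1)), ← tsum_mul_left]
  apply tsum_congr
  intro m
  have r2 := qI_rec hq (m + (s+1+1))
  rw [show m + (s+1+1) - 1 = m + (s+1) by ring] at r2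
  rw [show m + 1 - 1 = m by ring, show m + 1 + (s+1) = m + (s+1+1) by ring, r2]
  have x1 : q ^ ((m+1) * (m+1) + s * (m+1)) = q ^ (m * m + (s+1) * m) * q ^ m * q ^ (s+1) := by
    rw [← zpow_add₀ hq0, ← zpow_add₀ hq0]; congr 1; ring
  have x2 : q ^ (m * m + (s+1+1) * m) = q ^ (m * m + (s+1) * m) * q ^ m := by
    rw [← zpow_add₀ hq0]; congr 1; ring
  rw [x1, x2, zpow_add₀ hq0 m]
  ring

lemma qE_lim {q : ℂ} (hq0 : q ≠ 0) (hq : ‖q‖ < 1) :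
    Filter.Tendsto (fun s : ℕ => qE q s) Filter.atTop (nhds ((qPochInf q q)⁻¹)) := by
  obtain ⟨C, hC0, hC⟩ := qII_bdd hq
  have h1 : Filter.Tendsto (fun s : ℕ => qE q s) Filter.atTop
      (nhds (∑' n : ℤ, if n = 0 then (qPochInf q q)⁻¹ else 0)) := by
    apply tendsto_tsum_of_dominated_convergence
      (bound := fun m : ℤ => ‖q ^ (m * m + 0 * m) * (C:ℂ)‖)
      ((summable_sq hq0 hq 0 (fun _ => (C:ℂ)) C (by intro n; simp [abs_of_pos hC0])).norm)
    · intro n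
      split_ifs with h
      · subst h
        simp only [mul_zero, add_zero, zpow_zero, one_mul, zero_add, qI_zero, qI_nat]
        exact (tendsto_qPoch q hq).inv₀ (qPochInf_ne' hq hq)
      · rcases lt_or_gt_of_ne h with h | h
        · simp [qI_neg q h]
        · apply squeeze_zero_norm (a := fun s : ℕ => ‖q‖ ^ s * C)
          · intro s
            rw [norm_mul]
            refine mul_le_mul ?_ (hC _ _) (norm_nonneg _) (by positivity)
            obtain ⟨k, rfl⟩ : ∃ k : ℕ, n = k + 1 := ⟨(n-1).toNat, by omega⟩
            have : q ^ (((k:ℤ)+1) * (k+1) + s * (k+1)) = q ^ s * q ^ ((k+1)*(k+1) + s * k) := by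
              rw [← pow_add, ← zpow_natCast]; congr 1; push_cast; ring
            rw [this, norm_mul, norm_pow, norm_pow]
            have h2 : ‖q‖ ^ ((k+1)*(k+1) + s * k) ≤ 1 := pow_le_one₀ (norm_nonneg _) hq.le
            nlinarith [pow_nonneg (norm_nonneg q) s]
          · simpa using (tendsto_pow_atTop_nhds_zero_of_lt_one (norm_nonneg q) hq).mul_const C
    · filter_upwards with s n
      rcases lt_or_ge n 0 with h | h
      · rw [qI_neg q h]; simp only [zero_mul, mul_zero, norm_zero]; exact norm_nonneg _
      · rw [norm_mul, norm_mul _ (C:ℂ), zpow_add₀ hq0, norm_mul]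
        have h2 : ‖q ^ ((s:ℤ) * n)‖ ≤ 1 := norm_le_one_zpow hq (by positivity)
        have h3 := hC n (n + s)
        have h4 : ‖(C:ℂ)‖ = C := by simp [abs_of_pos hC0]
        rw [h4]
        refine mul_le_mul ?_ h3 (norm_nonneg _) (norm_nonneg _)
        simp only [zero_mul, add_zero]
        nlinarith [norm_nonneg (q ^ (n * n))]
  rw [tsum_ite_eq] at h1
  exact h1

lemma qE_const {q : ℂ} (hq0 : q ≠ 0) (hq : ‖q‖ < 1) (s : ℤ) : qE q s = (qPochInf q q)⁻¹ := by
  have hd0 : ∀ s : ℕ, qE q s - qE q ((s:ℤ)+1) = 0 := by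
    intro s
    have hlim : Filter.Tendsto (fun k : ℕ => ‖qE q ((s + k : ℕ):ℤ) - qE q (((s+k : ℕ):ℤ)+1)‖)
        Filter.atTop (nhds 0) := by
      have a := qE_lim hq0 hq
      have b := (a.sub (a.comp (Filter.tendsto_add_atTop_nat 1))).norm
      have c := b.comp (Filter.tendsto_add_atTop_nat s)
      simp only [sub_self, norm_zero] at c
      refine c.congr ?_
      intro k
      simp only [Function.comp]
      rw [add_comm k s]
      push_cast
      rfl
    have hle : ∀ k : ℕ, ‖qE q (s:ℤ) - qE q ((s:ℤ)+1)‖ ≤ ‖qE q ((s + k : ℕ):ℤ) - qE q (((s+k : ℕ):ℤ)+1)‖ := by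
      intro k
      induction k with
      | zero => simp
      | succ k ih =>
        refine ih.trans ?_
        rw [qE_diff hq0 hq, norm_mul, norm_neg]
        have := norm_le_one_zpow hq (n := ((s+k:ℕ):ℤ)+1) (by positivity)
        push_cast at *
        rw [add_assoc (s:ℤ) k 1] at *
        exact mul_le_of_le_one_left (norm_nonneg _) this
    have := ge_of_tendsto' hlim hle
    exact norm_le_zero_iff.mp this
  have hneg : ∀ s : ℕ, qE q (-(s:ℤ)) - qE q (-(s:ℤ)+1) = 0 := by
    intro s
    induction s with
    | zero => simpa using hd0 0
    | succ s ih =>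
      rw [qE_diff hq0 hq]
      push_cast
      rw [show -((s:ℤ)+1)+1 = -(s:ℤ) by ring, ih, mul_zero]
  have hz : ∀ s : ℤ, qE q s = qE q 0 := by
    intro s
    induction s using Int.induction_on with
    | zero => rfl
    | succ i ih => rw [← ih]; have := hd0 i; linear_combination -this
    | pred i ih =>
      rw [← ih]
      have := hneg (i+1)
      push_cast at this
      rw [show -((i:ℤ)+1)+1 = -(i:ℤ) by ring] at this
      rw [show -(i:ℤ) - 1 = -((i:ℤ)+1) by ring]
      linear_combination this
  have := tendsto_nhds_unique ((qE_lim hq0 hq).congr (fun n : ℕ => hz (n:ℤ))) tendsto_const_nhds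
  rw [hz, this]

lemma jtp {q z : ℂ} (hq0 : q ≠ 0) (hq : ‖q‖ < 1) (hz : z ≠ 0) :
    ∑' s : ℤ, q ^ (tri s) * z ^ s = qPochInf (-z) q * qPochInf (-(q / z)) q * qPochInf q q := by
  have hqz : q / z ≠ 0 := div_ne_zero hq0 hz
  have s1 := euler_summable hq0 hq hz
  have s2 := euler_summable hq0 hq hqz
  rw [← euler hq0 hq hz, ← euler hq0 hq hqz, tsum_mul_tsum_of_summable_norm s1 s2]
  have s3 := (summable_mul_of_summable_norm s1 s2)
  let e : ℤ × ℤ ≃ ℤ × ℤ :=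
    { toFun := fun p => (p.2 + p.1, p.2)
      invFun := fun p => (p.1 - p.2, p.2)
      left_inv := by intro p; simp
      right_inv := by intro p; simp }
  rw [← e.tsum_eq]
  have s4 := e.summable_iff.mpr s3
  have hne := qPochInf_ne' hq hq
  have h1 := s4.tsum_prod
  simp only [Function.comp_def] at h1
  rw [h1, ← tsum_mul_right]
  apply tsum_congr
  intro s
  have h2 : ∀ m : ℤ, (q ^ tri (e (s, m)).1 * z ^ (e (s, m)).1 * qI q (e (s, m)).1 *
      (q ^ tri (e (s, m)).2 * (q / z) ^ (e (s, m)).2 * qI q (e (s, m)).2))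
      = q ^ tri s * z ^ s * (q ^ (m * m + s * m) * (qI q m * qI q (m + s))) := by
    intro m
    have x : q ^ tri (m + s) * q ^ tri m * q ^ m = q ^ tri s * q ^ (m * m + s * m) := by
      rw [← zpow_add₀ hq0, ← zpow_add₀ hq0, ← zpow_add₀ hq0]
      congr 1
      have a := two_tri (m+s)
      have b := two_tri m
      have c := two_tri s
      linarith
    have y : z ^ (m + s) * (q / z) ^ m = q ^ m * z ^ s := by
      rw [zpow_add₀ hz, div_zpow]
      have := zpow_ne_zero m hz
      field_simp
    simp only [e, Equiv.coe_fn_mk]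
    linear_combination (z ^ s * (qI q m * qI q (m + s))) * x +
       (q ^ tri (m+s) * q ^ tri m * (qI q m * qI q (m + s))) * y
  rw [tsum_congr h2, tsum_mul_left]
  have h3 := qE_const hq0 hq s
  unfold qE at h3
  rw [h3, mul_assoc, inv_mul_cancel₀ hne, mul_one]

lemma bailey {Q : ℂ} (hq0 : Q ≠ 0) (hq : ‖Q‖ < 1) (c : ℤ) (hc : c ≤ 1) (k : ℤ → ℤ) (F : ℤ → ℂ)
    (hF : Summable (fun r => ‖F r‖)) :
    ∑' n : ℕ, Q ^ ((n:ℤ) * n + c * n) * ∑' r : ℤ, F r * (qI Q (n - k r) * qI Q (n + k r + c)) =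
      (qPochInf Q Q)⁻¹ * ∑' r : ℤ, F r * Q ^ (k r * k r + c * k r) := by
  obtain ⟨C, hC0, hC⟩ := qII_bdd hq
  rw [tsum_int_nat (fun n : ℤ => Q ^ (n * n + c * n) * ∑' r : ℤ, F r * (qI Q (n - k r) * qI Q (n + k r + c)))]
  · simp_rw [← tsum_mul_left]
    have hs : Summable (Function.uncurry (fun n r : ℤ => Q ^ (n * n + c * n) *
        (F r * (qI Q (n - k r) * qI Q (n + k r + c))))) := by
      have h1 : Summable (fun n : ℤ => ‖Q ^ (n * n + c * n)‖) := by
        simpa using (summable_sq hq0 hq c (fun _ => 1) 1 (by simp)).norm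
      have h2 := (summable_mul_of_summable_norm (f := fun n : ℤ => ‖Q ^ (n * n + c * n)‖)
        (g := fun r : ℤ => ‖F r‖) (by simpa using h1) (by simpa using hF)).mul_right C
      refine Summable.of_norm_bounded h2 ?_
      rintro ⟨n, r⟩
      simp only [Function.uncurry]
      rw [norm_mul, norm_mul, ← mul_assoc]
      exact mul_le_mul_of_nonneg_left (hC _ _) (by positivity)
    rw [← hs.tsum_comm]
    apply tsum_congr
    intro r
    have h3 := qE_const hq0 hq (2 * k r + c)
    unfold qE at h3
    rw [← h3, ← tsum_shift _ (k r), ← tsum_mul_right]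
    apply tsum_congr
    intro m
    have x : Q ^ ((m + k r) * (m + k r) + c * (m + k r)) =
        Q ^ (m * m + (2 * k r + c) * m) * Q ^ (k r * k r + c * k r) := by
      rw [← zpow_add₀ hq0]; congr 1; ring
    rw [x, show m + k r - k r = m by ring, show m + k r + k r + c = m + (2 * k r + c) by ring]
    ring
  · intro n hn
    have : ∀ r : ℤ, F r * (qI Q (n - k r) * qI Q (n + k r + c)) = 0 := by
      intro r
      rcases lt_or_ge (n - k r) 0 with h | h
      · simp [qI_neg Q h]
      · simp [qI_neg Q (show n + k r + c < 0 by omega)]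
    simp [this]

lemma summable_gen {q : ℂ} (hq0 : q ≠ 0) (hq : ‖q‖ < 1) (a : ℕ) (ha : a ≠ 0) (b : ℤ) :
    Summable (fun r : ℤ => ‖(-1) ^ r * q ^ (a * tri r + b * r)‖) := by
  have := summable_tri (q := q ^ a) (z := q ^ b) (pow_ne_zero a hq0)
    (by rw [norm_pow]; exact pow_lt_one₀ (norm_nonneg _) hq ha) (zpow_ne_zero _ hq0)
  refine this.congr ?_
  intro m
  rw [norm_mul ((-1 : ℂ)^m), norm_zpow, norm_neg, norm_one, one_zpow, one_mul, ← zpow_natCast, ← zpow_mul, ← zpow_mul, ← zpow_add₀ hq0]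

lemma summable_mul_bdd {F : ℤ → ℂ} (hF : Summable (fun r => ‖F r‖)) (f : ℤ → ℂ) (C : ℝ)
    (hf : ∀ n, ‖f n‖ ≤ C) : Summable (fun r => F r * f r) := by
  refine Summable.of_norm_bounded (hF.mul_right C) ?_
  intro r
  rw [norm_mul]
  exact mul_le_mul_of_nonneg_left (hf r) (norm_nonneg _)

lemma wz_tele {A B G : ℤ → ℂ} (c : ℂ) (hA : Summable A) (hB : Summable B) (hG : Summable G)
    (h : ∀ r, c * A r - B r = G (r+1) - G r) : c * ∑' r, A r = ∑' r, B r := by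
  have hG' : Summable (fun r => G (r+1)) := (Equiv.addRight (1:ℤ)).summable_iff.mpr hG
  have h1 : ∑' r, (c * A r - B r) = ∑' r, (G (r+1) - G r) := tsum_congr h
  rw [(hA.mul_left c).tsum_sub hB, hG'.tsum_sub hG, tsum_shift, sub_self, tsum_mul_left] at h1
  linear_combination h1

noncomputable def F1 (q : ℂ) (r : ℤ) : ℂ := (-1) ^ r * q ^ (6 * tri r + 2 * r) + (-1) ^ r * q ^ (6 * tri r + 4 * r)

lemma F1_summable {q : ℂ} (hq0 : q ≠ 0) (hq : ‖q‖ < 1) : Summable (fun r => ‖F1 q r‖) := by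
  have h1 := (summable_gen hq0 hq 6 (by norm_num) 2)
  have h2 := (summable_gen hq0 hq 6 (by norm_num) 4)
  refine Summable.of_nonneg_of_le (fun _ => norm_nonneg _) (fun r => ?_) (h1.add h2)
  exact norm_add_le _ _

lemma wz1_step {q : ℂ} (hq0 : q ≠ 0) (hq : ‖q‖ < 1) (n : ℤ) :
    ((1 - q ^ (n+1)) * (1 - q ^ (2*n+1))) *
      ∑' r : ℤ, F1 q r * (qI q (n + 1 - 2 * r) * qI q (n + 1 + 2 * r + 0)) =
      ∑' r : ℤ, F1 q r * (qI q (n - 2 * r) * qI q (n + 2 * r + 0)) := by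
  obtain ⟨C, hC0, hC⟩ := qII_bdd hq
  apply wz_tele (G := fun r => ((-1) ^ r * q ^ (((6:ℕ):ℤ) * tri r + 0 * r)) *
    (- q ^ (n+1) * (qI q (n + 1 - 2 * r) * qI q (n - 1 + 2 * r))))
  · exact summable_mul_bdd (F1_summable hq0 hq) _ C (fun r => hC _ _)
  · exact summable_mul_bdd (F1_summable hq0 hq) _ C (fun r => hC _ _)
  · refine summable_mul_bdd (summable_gen hq0 hq 6 (by norm_num) 0) _ (‖q ^ (n+1)‖ * C) (fun r => ?_)
    rw [norm_mul, norm_neg]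
    exact mul_le_mul_of_nonneg_left (hC _ _) (norm_nonneg _)
  · intro r
    have r1 := qI_rec hq (n + 1 - 2 * r)
    have r2 := qI_rec hq (n + 1 - 2 * r - 1)
    have r3 := qI_rec hq (n + 1 + 2 * r)
    have r4 := qI_rec hq (n + 1 + 2 * r - 1)
    have e1 : n + 1 - 2 * (r + 1) = n + 1 - 2 * r - 1 - 1 := by ring
    have e2 : n - 1 + 2 * (r + 1) = n + 1 + 2 * r := by ring
    have e3 : n - 2 * r = n + 1 - 2 * r - 1 := by ring
    have e4 : n + 2 * r = n + 1 + 2 * r - 1 := by ring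
    have e5 : n - 1 + 2 * r = n + 1 + 2 * r - 1 - 1 := by ring
    simp only [add_zero, zero_mul, F1, e1, e2, e3, e4, e5, tri_succ]
    rw [r2, r4, r1, r3]
    have y0 : q ^ r ≠ 0 := zpow_ne_zero _ hq0
    have x1 : q ^ (n + 1 - 2 * r) = q ^ n * q / (q ^ r)^2 := by
      rw [zpow_sub₀ hq0, zpow_add₀ hq0, zpow_mul']; simp
    have x2 : q ^ (n + 1 - 2 * r - 1) = q ^ n / (q ^ r)^2 := by
      rw [show n + 1 - 2 * r - 1 = n - 2 * r by ring, zpow_sub₀ hq0, zpow_mul']; simp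
    have x3 : q ^ (n + 1 + 2 * r) = q ^ n * q * (q ^ r)^2 := by
      rw [zpow_add₀ hq0, zpow_add₀ hq0, zpow_mul']; simp
    have x4 : q ^ (n + 1 + 2 * r - 1) = q ^ n * (q ^ r)^2 := by
      rw [show n + 1 + 2 * r - 1 = n + 2 * r by ring, zpow_add₀ hq0, zpow_mul']; simp
    have x5 : q ^ (6 * tri r + 2 * r) = (q ^ tri r) ^ 6 * (q ^ r)^2 := by
      rw [zpow_add₀ hq0, zpow_mul', zpow_mul']; norm_cast
    have x6 : q ^ (6 * tri r + 4 * r) = (q ^ tri r) ^ 6 * (q ^ r)^4 := by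
      rw [zpow_add₀ hq0, zpow_mul', zpow_mul']; norm_cast
    have x7 : q ^ (((6:ℕ):ℤ) * tri r) = (q ^ tri r) ^ 6 := by
      rw [zpow_mul']; norm_cast
    have x8 : q ^ (((6:ℕ):ℤ) * (tri r + r)) = (q ^ tri r) ^ 6 * (q ^ r)^6 := by
      rw [mul_add, zpow_add₀ hq0, zpow_mul', zpow_mul']; norm_cast
    have x9 : q ^ (n + 1) = q ^ n * q := by
      rw [zpow_add₀ hq0]; simp
    have x10 : q ^ (2 * n + 1) = (q ^ n)^2 * q := by
      rw [zpow_add₀ hq0, zpow_mul']; simp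
    have x11 : (-1 : ℂ) ^ (r + 1) = - (-1) ^ r := by
      rw [zpow_add₀ (by norm_num)]; simp
    rw [x1, x2, x3, x4, x5, x6, x7, x8, x9, x10, x11]
    generalize q ^ n = X at *
    generalize q ^ r = Y at *
    generalize q ^ tri r = K at *
    generalize (-1 : ℂ) ^ r = e at *
    field_simp
    ring

lemma wz1 {q : ℂ} (hq0 : q ≠ 0) (hq : ‖q‖ < 1) (n : ℕ) :
    ∑' r : ℤ, F1 q r * (qI q ((n:ℤ) - 2 * r) * qI q ((n:ℤ) + 2 * r + 0)) =
      2 * (qPoch (-q) q n * qI q (2 * n : ℕ)) := by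
  induction n with
  | zero =>
    rw [tsum_eq_single 0]
    · simp [F1, qI_zero, qPoch_zero, tri_zero]; norm_num
    · intro r hr
      rcases lt_or_gt_of_ne hr with h | h
      · rw [qI_neg q (show ((0:ℕ):ℤ) + 2 * r + 0 < 0 by push_cast; omega)]; simp
      · rw [qI_neg q (show ((0:ℕ):ℤ) - 2 * r < 0 by push_cast; omega)]; simp
  | succ n ih =>
    have h := wz1_step hq0 hq n
    rw [ih] at h
    have n1 : 1 - q ^ (n+1) ≠ 0 := one_sub_pow_ne hq (by omega)
    have n2 : 1 - q ^ (2*n+1) ≠ 0 := one_sub_pow_ne hq (by omega)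
    have c1 : q ^ ((n:ℤ)+1) = q ^ (n+1) := by norm_cast
    have c2 : q ^ (2*(n:ℤ)+1) = q ^ (2*n+1) := by norm_cast
    rw [c1, c2] at h
    push_cast at h ⊢
    apply mul_left_cancel₀ (mul_ne_zero n1 n2)
    rw [h, qPoch_succ]
    have r1 := qI_rec hq (2 * (n + 1))
    have r2 := qI_rec hq (2 * (n + 1) - 1)
    rw [show (2 * ((n:ℤ) + 1) - 1 - 1) = 2 * n by ring] at r2
    rw [r2, r1]
    have c3 : q ^ (2 * ((n:ℤ)+1)) = q ^ (2 * n + 2) := by norm_cast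
    have c4 : q ^ (2 * ((n:ℤ)+1) - 1) = q ^ (2 * n + 1) := by
      rw [show (2 * ((n:ℤ)+1) - 1) = 2 * n + 1 by ring]; norm_cast
    rw [c3, c4]
    ring

lemma slater61 {q : ℂ} (hq0 : q ≠ 0) (hq : ‖q‖ < 1) :
    ∑' n : ℕ, q ^ (n * n) * (qPoch (-q) q n * qI q (2 * n : ℕ)) =
      (qPochInf q q)⁻¹ * ∑' r : ℤ, (-1) ^ r * q ^ (((14 : ℕ):ℤ) * tri r + 6 * r) := by
  have h := bailey hq0 hq 0 (by norm_num) (fun r => 2 * r) (F1 q) (F1_summable hq0 hq)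
  have h1 : ∀ n : ℕ, q ^ ((n:ℤ) * n + 0 * n) * ∑' r : ℤ, F1 q r * (qI q (n - 2 * r) * qI q (n + 2 * r + 0))
      = 2 * (q ^ (n * n) * (qPoch (-q) q n * qI q (2 * n : ℕ))) := by
    intro n
    rw [wz1 hq0 hq]
    have : q ^ ((n:ℤ) * n + 0 * n) = q ^ (n * n) := by rw [zero_mul, add_zero]; norm_cast
    rw [this]; ring
  rw [tsum_congr h1, tsum_mul_left] at h
  have s1 := (summable_gen hq0 hq 14 (by norm_num) 6).of_norm
  have s2 := (summable_gen hq0 hq 14 (by norm_num) 8).of_norm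
  have h2 : ∑' r : ℤ, F1 q r * q ^ (2 * r * (2 * r) + 0 * (2 * r)) =
      ∑' r : ℤ, (-1) ^ r * q ^ (((14 : ℕ):ℤ) * tri r + 6 * r) + ∑' r : ℤ, (-1) ^ r * q ^ (((14 : ℕ):ℤ) * tri r + 8 * r) := by
    rw [← s1.tsum_add s2]
    apply tsum_congr
    intro r
    have t := two_tri r
    unfold F1
    have x1 : q ^ (6 * tri r + 2 * r) * q ^ (2 * r * (2 * r) + 0 * (2 * r)) = q ^ (((14 : ℕ):ℤ) * tri r + 6 * r) := by
      rw [← zpow_add₀ hq0]; congr 1; push_cast; linear_combination -4 * t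
    have x2 : q ^ (6 * tri r + 4 * r) * q ^ (2 * r * (2 * r) + 0 * (2 * r)) = q ^ (((14 : ℕ):ℤ) * tri r + 8 * r) := by
      rw [← zpow_add₀ hq0]; congr 1; push_cast; linear_combination -4 * t
    linear_combination (-1) ^ r * x1 + (-1) ^ r * x2
  have h3 : ∑' r : ℤ, (-1 : ℂ) ^ r * q ^ (((14 : ℕ):ℤ) * tri r + 8 * r) = ∑' r : ℤ, (-1) ^ r * q ^ (((14 : ℕ):ℤ) * tri r + 6 * r) := by
    rw [← (Equiv.neg ℤ).tsum_eq]
    apply tsum_congr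
    intro r
    simp only [Equiv.neg_apply]
    rw [tri_neg]
    have : (-1 : ℂ) ^ (-r) = (-1) ^ r := by rw [zpow_neg, ← inv_zpow]; norm_num
    rw [this]
    congr 2
    push_cast; ring
  rw [h2, h3] at h
  linear_combination h / 2

noncomputable def F2 (w : ℂ) (r : ℤ) : ℂ :=
  (-1) ^ r * w ^ (3 * tri r + 2 * r) - w * ((-1) ^ r * w ^ (3 * tri r + 4 * r))

lemma F2_summable {q : ℂ} (hq0 : q ≠ 0) (hq : ‖q‖ < 1) : Summable (fun r => ‖F2 q r‖) := by
  have h1 := (summable_gen hq0 hq 3 (by norm_num) 2)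
  have h2 := (summable_gen hq0 hq 3 (by norm_num) 4).mul_left ‖q‖
  refine Summable.of_nonneg_of_le (fun _ => norm_nonneg _) (fun r => ?_) (h1.add h2)
  refine (norm_sub_le _ _).trans ?_
  rw [norm_mul q]
  exact le_refl _

lemma norm_sq_lt {q : ℂ} (hq : ‖q‖ < 1) : ‖q ^ 2‖ < 1 := by
  rw [norm_pow]; exact pow_lt_one₀ (norm_nonneg _) hq (by simp)

lemma wz2_step {w : ℂ} (hq0 : w ≠ 0) (hq : ‖w‖ < 1) (n : ℤ) :
    ((1 - w ^ (4*n+4)) * (1 + w ^ (2*n+3))) *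
      ∑' r : ℤ, F2 w r * (qI (w^2) (n + 1 - r) * qI (w^2) (n + 1 + r + 1)) =
      ∑' r : ℤ, F2 w r * (qI (w^2) (n - r) * qI (w^2) (n + r + 1)) := by
  have hq2 := norm_sq_lt hq
  obtain ⟨C, hC0, hC⟩ := qII_bdd hq2
  have sG : ∀ (a : ℂ) (b : ℤ), Summable (fun r : ℤ => a * ((-1) ^ r * w ^ (((3:ℕ):ℤ) * tri r + b * r) *
      (qI (w^2) (n + 1 - r) * qI (w^2) (n + 1 + r)))) := by
    intro a b
    apply Summable.mul_left
    exact summable_mul_bdd (summable_gen hq0 hq 3 (by norm_num) b) _ C (fun r => hC _ _)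
  apply wz_tele (G := fun r =>
      - (w ^ 2 * (w ^ n)^2) * ((-1) ^ r * w ^ (((3:ℕ):ℤ) * tri r + 0 * r) * (qI (w^2) (n + 1 - r) * qI (w^2) (n + 1 + r)))
      + (- (w ^ 4 * (w ^ n)^4) * ((-1) ^ r * w ^ (((3:ℕ):ℤ) * tri r + 1 * r) * (qI (w^2) (n + 1 - r) * qI (w^2) (n + 1 + r)))
      + ((w ^ 4 * (w ^ n)^4) * ((-1) ^ r * w ^ (((3:ℕ):ℤ) * tri r + 2 * r) * (qI (w^2) (n + 1 - r) * qI (w^2) (n + 1 + r)))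
      + (w ^ 2 * (w ^ n)^2) * ((-1) ^ r * w ^ (((3:ℕ):ℤ) * tri r + 3 * r) * (qI (w^2) (n + 1 - r) * qI (w^2) (n + 1 + r))))))
  · exact summable_mul_bdd (F2_summable hq0 hq) _ C (fun r => hC _ _)
  · exact summable_mul_bdd (F2_summable hq0 hq) _ C (fun r => hC _ _)
  · exact (sG _ _).add ((sG _ _).add ((sG _ _).add (sG _ _)))
  · intro r
    have r1 := qI_rec hq2 (n + 1 - r)
    have r3 := qI_rec hq2 (n + 1 + r + 1)
    have e1 : n + 1 - (r + 1) = n + 1 - r - 1 := by ring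
    have e2 : n + 1 + (r + 1) = n + 1 + r + 1 := by ring
    have e3 : n - r = n + 1 - r - 1 := by ring
    have e4 : n + r + 1 = n + 1 + r + 1 - 1 := by ring
    have e5 : n + 1 + r + 1 - 1 = n + 1 + r := by ring
    rw [e5] at r3 e4
    simp only [F2, e1, e2, e3, e4, tri_succ]
    rw [r1, r3]
    have y0 : w ^ r ≠ 0 := zpow_ne_zero _ hq0
    have x1 : (w^2) ^ (n + 1 - r) = (w ^ n)^2 * w^2 / (w ^ r)^2 := by
      rw [← zpow_natCast w 2, ← zpow_mul, zpow_mul', zpow_sub₀ hq0, zpow_add₀ hq0]; push_cast; rw [zpow_ofNat, div_pow, mul_pow, zpow_one]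
      norm_cast
    have x3 : (w^2) ^ (n + 1 + r + 1) = (w ^ n)^2 * w ^ 4 * (w ^ r)^2 := by
      rw [← zpow_natCast w 2, ← zpow_mul, zpow_mul', zpow_add₀ hq0, zpow_add₀ hq0, zpow_add₀ hq0]; push_cast; rw [zpow_ofNat, zpow_one]
      ring
    have xx : ∀ b : ℕ, w ^ (3 * tri r + (b:ℤ) * r) = (w ^ tri r) ^ 3 * (w ^ r)^b := by
      intro b
      rw [zpow_add₀ hq0, zpow_mul', zpow_mul', zpow_natCast]; norm_cast
    have xy : ∀ b : ℕ, w ^ (3 * (tri r + r) + (b:ℤ) * (r + 1)) = (w ^ tri r) ^ 3 * (w ^ r)^3 * (w ^ r * w)^b := by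
      intro b
      rw [zpow_add₀ hq0, zpow_mul', zpow_mul', zpow_natCast, zpow_add₀ hq0, zpow_add₀ hq0, zpow_one]
      rw [zpow_ofNat]; ring
    have a0 := xx 0
    have a1 := xx 1
    have a2 := xx 2
    have a3 := xx 3
    have a4 := xx 4
    have b0 := xy 0
    have b1 := xy 1
    have b2 := xy 2
    have b3 := xy 3
    have x9 : w ^ (4 * n + 4) = (w ^ n)^4 * w^4 := by
      rw [zpow_add₀ hq0, zpow_mul']; norm_cast
    have x10 : w ^ (2 * n + 3) = (w ^ n)^2 * w^3 := by
      rw [zpow_add₀ hq0, zpow_mul']; norm_cast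
    have x11 : (-1 : ℂ) ^ (r + 1) = - (-1) ^ r := by
      rw [zpow_add₀ (by norm_num)]; simp
    push_cast at a0 a1 a2 a3 a4 b0 b1 b2 b3 ⊢
    rw [x1, x3, a0, a1, a2, a3, a4, b0, b1, b2, b3, x9, x10, x11]
    generalize w ^ n = X at *
    generalize w ^ r = Y at *
    generalize w ^ tri r = K at *
    generalize (-1 : ℂ) ^ r = e at *
    field_simp
    ring

lemma wz2 {w : ℂ} (hq0 : w ≠ 0) (hq : ‖w‖ < 1) (n : ℕ) :
    ∑' r : ℤ, F2 w r * (qI (w^2) ((n:ℤ) - r) * qI (w^2) ((n:ℤ) + r + 1)) =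
      2 * (qPoch w (w^2) (n+1) * qI (w^2) (2 * n + 1 : ℕ)) := by
  have hq2 := norm_sq_lt hq
  induction n with
  | zero =>
    rw [tsum_eq_sum (s := {0, -1})]
    · rw [Finset.sum_pair (by norm_num)]
      simp [F2, qI_zero, qPoch_succ, qPoch_zero, tri]
      have : w ^ (-1 : ℤ) = w⁻¹ := by simp
      norm_num
      field_simp
      ring
    · intro r hr
      simp only [Finset.mem_insert, Finset.mem_singleton, not_or] at hr
      rcases lt_or_gt_of_ne hr.1 with h | h
      · rw [qI_neg _ (show ((0:ℕ):ℤ) + r + 1 < 0 by push_cast; omega)]; simp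
      · rw [qI_neg _ (show ((0:ℕ):ℤ) - r < 0 by push_cast; omega)]; simp
  | succ n ih =>
    have h := wz2_step hq0 hq n
    rw [ih] at h
    have n1 : 1 - w ^ (4*n+4) ≠ 0 := one_sub_pow_ne hq (by omega)
    have n2 : 1 + w ^ (2*n+3) ≠ 0 := by
      intro h
      have : 1 - w ^ (2 * (2*n+3)) ≠ 0 := one_sub_pow_ne hq (by omega)
      apply this
      rw [mul_comm, pow_mul]
      linear_combination (1 - w ^ (2*n+3)) * h
    have c1 : w ^ (4*(n:ℤ)+4) = w ^ (4*n+4) := by norm_cast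
    have c2 : w ^ (2*(n:ℤ)+3) = w ^ (2*n+3) := by norm_cast
    rw [c1, c2] at h
    push_cast at h ⊢
    apply mul_left_cancel₀ (mul_ne_zero n1 n2)
    rw [h, qPoch_succ w _ (n+1)]
    have r1 := qI_rec hq2 (2 * (n + 1) + 1)
    have r2 := qI_rec hq2 (2 * (n + 1) + 1 - 1)
    rw [show (2 * ((n:ℤ) + 1) + 1 - 1 - 1) = 2 * n + 1 by ring] at r2
    rw [r2, r1]
    have c3 : (w^2) ^ (2 * ((n:ℤ)+1) + 1) = w ^ (2 * (2 * n + 3)) := by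
      rw [pow_mul, ← zpow_natCast (w^2)]; congr 1
    have c4 : (w^2) ^ (2 * ((n:ℤ)+1) + 1 - 1) = w ^ (4 * n + 4) := by
      rw [show 4 * n + 4 = 2 * (2 * n + 2) by ring, pow_mul, ← zpow_natCast (w^2)]; congr 1; push_cast; ring
    rw [c3, c4]
    ring

lemma rogersSelberg {w : ℂ} (hq0 : w ≠ 0) (hq : ‖w‖ < 1) :
    ∑' n : ℕ, (w^2) ^ (n * n + n) * (qPoch w (w^2) (n+1) * qI (w^2) (2 * n + 1 : ℕ)) =
      (qPochInf (w^2) (w^2))⁻¹ * ∑' r : ℤ, (-1) ^ r * w ^ (((7 : ℕ):ℤ) * tri r + 6 * r) := by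
  have hq2 := norm_sq_lt hq
  have h := bailey (pow_ne_zero 2 hq0) hq2 1 (by norm_num) (fun r => r) (F2 w) (F2_summable hq0 hq)
  have h1 : ∀ n : ℕ, (w^2) ^ ((n:ℤ) * n + 1 * n) * ∑' r : ℤ, F2 w r * (qI (w^2) (n - r) * qI (w^2) (n + r + 1))
      = 2 * ((w^2) ^ (n * n + n) * (qPoch w (w^2) (n+1) * qI (w^2) (2 * n + 1 : ℕ))) := by
    intro n
    rw [wz2 hq0 hq]
    have : (w^2) ^ ((n:ℤ) * n + 1 * n) = (w^2) ^ (n * n + n) := by rw [one_mul]; norm_cast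
    rw [this]; ring
  rw [tsum_congr h1, tsum_mul_left] at h
  have s1 := (summable_gen hq0 hq 7 (by norm_num) 6).of_norm
  have s2 := ((summable_gen hq0 hq 7 (by norm_num) 8).of_norm).mul_left w
  have h2 : ∑' r : ℤ, F2 w r * (w^2) ^ (r * r + 1 * r) =
      ∑' r : ℤ, (-1) ^ r * w ^ (((7 : ℕ):ℤ) * tri r + 6 * r) - ∑' r : ℤ, w * ((-1) ^ r * w ^ (((7 : ℕ):ℤ) * tri r + 8 * r)) := by
    rw [← s1.tsum_sub s2]
    apply tsum_congr
    intro r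
    have t := two_tri r
    unfold F2
    rw [← zpow_natCast w 2, ← zpow_mul]
    have x1 : w ^ (3 * tri r + 2 * r) * w ^ (((2:ℕ):ℤ) * (r * r + 1 * r)) = w ^ (((7 : ℕ):ℤ) * tri r + 6 * r) := by
      rw [← zpow_add₀ hq0]; congr 1; push_cast; linear_combination -2 * t
    have x2 : w ^ (3 * tri r + 4 * r) * w ^ (((2:ℕ):ℤ) * (r * r + 1 * r)) = w ^ (((7 : ℕ):ℤ) * tri r + 8 * r) := by
      rw [← zpow_add₀ hq0]; congr 1; push_cast; linear_combination -2 * t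
    linear_combination (-1) ^ r * x1 - w * (-1) ^ r * x2
  have h3 : ∑' r : ℤ, w * ((-1 : ℂ) ^ r * w ^ (((7 : ℕ):ℤ) * tri r + 8 * r)) = - ∑' r : ℤ, (-1) ^ r * w ^ (((7 : ℕ):ℤ) * tri r + 6 * r) := by
    rw [← (Equiv.subLeft (-1:ℤ)).tsum_eq, ← tsum_neg]
    apply tsum_congr
    intro r
    simp only [Equiv.subLeft_apply]
    have : (-1 : ℂ) ^ (-1-r) = -(-1) ^ r := by
      rw [zpow_sub₀ (by norm_num)]
      have : ((-1:ℂ)^r)⁻¹ = (-1)^r := by rw [← inv_zpow]; norm_num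
      rw [div_eq_mul_inv, this]; norm_num
    rw [this]
    have x : w ^ (((7 : ℕ):ℤ) * tri r + 6 * r) = w * w ^ (((7 : ℕ):ℤ) * tri (-1 - r) + 8 * (-1 - r)) := by
      nth_rewrite 2 [← zpow_one w]
      rw [← zpow_add₀ hq0]
      congr 1
      have t := two_tri r
      have t' := two_tri (-1-r)
      push_cast
      linarith
    rw [x]; ring
  rw [h2, h3] at h
  linear_combination h / 2

lemma qPoch_add (a q : ℂ) (m k : ℕ) :
    qPoch a q (m + k) = qPoch a q m * ∏ j ∈ Finset.range k, (1 - a * q ^ j * q ^ m) := by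
  unfold qPoch
  rw [Finset.prod_range_add]
  congr 1
  apply Finset.prod_congr rfl
  intro j _
  ring

lemma qPoch_split (a q : ℂ) (k N : ℕ) :
    qPoch a q (k * N) = ∏ j ∈ Finset.range k, qPoch (a * q ^ j) (q ^ k) N := by
  induction N with
  | zero => simp [qPoch_zero]
  | succ N ih =>
    rw [mul_add, mul_one, qPoch_add, ih, ← Finset.prod_mul_distrib]
    apply Finset.prod_congr rfl
    intro j _
    rw [qPoch_succ, pow_mul]

lemma qPochInf_split (a : ℂ) {q : ℂ} (hq : ‖q‖ < 1) (k : ℕ) (hk : k ≠ 0) :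
    qPochInf a q = ∏ j ∈ Finset.range k, qPochInf (a * q ^ j) (q ^ k) := by
  have hk1 : ‖q ^ k‖ < 1 := by rw [norm_pow]; exact pow_lt_one₀ (norm_nonneg _) hq hk
  have h1 : Filter.Tendsto (fun N => qPoch a q (k * N)) Filter.atTop (nhds (qPochInf a q)) :=
    (tendsto_qPoch a hq).comp (Filter.tendsto_id.const_mul_atTop' (Nat.pos_of_ne_zero hk))
  have h2 : Filter.Tendsto (fun N => ∏ j ∈ Finset.range k, qPoch (a * q ^ j) (q ^ k) N) Filter.atTop
      (nhds (∏ j ∈ Finset.range k, qPochInf (a * q ^ j) (q ^ k))) :=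
    tendsto_finsetProd _ (fun j _ => tendsto_qPoch _ hk1)
  exact tendsto_nhds_unique h1 (h2.congr (fun N => (qPoch_split a q k N).symm))

lemma qPochInf_sq (a : ℂ) {q : ℂ} (hq : ‖q‖ < 1) :
    qPochInf a q * qPochInf (-a) q = qPochInf (a ^ 2) (q ^ 2) := by
  unfold qPochInf
  rw [← (multip a hq).tprod_mul (multip (-a) hq)]
  apply tprod_congr
  intro n
  ring

lemma norm_pow_lt {q : ℂ} (hq : ‖q‖ < 1) {k : ℕ} (hk : k ≠ 0) : ‖q ^ k‖ < 1 := by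
  rw [norm_pow]; exact pow_lt_one₀ (norm_nonneg _) hq hk

lemma prod_A2 {q : ℂ} (hq : ‖q‖ < 1) : qPochInf (-(q ^ 2)) (q ^ 2) * J q 2 = J q 4 := by
  unfold J
  rw [mul_comm, qPochInf_sq _ (norm_sq_lt hq)]
  ring_nf

lemma prod_A1 {q : ℂ} (hq : ‖q‖ < 1) : qPochInf (-q) (q ^ 2) * J q 1 * J q 4 = J q 2 ^ 2 := by
  unfold J
  have h1 := qPochInf_split (q^1) (q := q^1) (by simpa using hq) 2 (by norm_num)
  have h2 := qPochInf_split (q^2) (q := q^2) (norm_sq_lt hq) 2 (by norm_num)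
  have h3 := qPochInf_sq q (norm_sq_lt hq)
  simp only [Finset.prod_range_succ, Finset.prod_range_zero, one_mul] at h1 h2
  ring_nf at h1 h2 h3 ⊢
  rw [h1, h2] at *
  linear_combination (qPochInf (q^2) (q^4) * qPochInf (q^4) (q^4)^2) * h3

lemma prod_T {q : ℂ} (hq : ‖q‖ < 1) :
    qPochInf ((-q)^6) ((-q)^7) * qPochInf (-q) ((-q)^7) * qPochInf ((-q)^7) ((-q)^7) *
      (Jam q 1 28 * Jam q 4 28 * Jam q 7 28 * Jam q 10 28 * Jam q 12 28 * Jam q 13 28)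
      = J q 2 * J q 14 * J q 28 ^ 5 := by
  have n7 : ‖(-q)^7‖ < 1 := by rw [norm_pow, norm_neg]; exact pow_lt_one₀ (norm_nonneg _) hq (by norm_num)
  have n14 : ‖q^14‖ < 1 := norm_pow_lt hq (by norm_num)
  have e1 := qPochInf_split ((-q)^6) n7 2 (by norm_num)
  have e2 := qPochInf_split (-q) n7 2 (by norm_num)
  have e3 := qPochInf_split ((-q)^7) n7 2 (by norm_num)
  have f1 := qPochInf_sq q n14
  have f13 := qPochInf_sq (q^13) n14
  have f7 := qPochInf_sq (q^7) n14
  have g1 := qPochInf_split q n14 2 (by norm_num)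
  have g13 := qPochInf_split (q^13) n14 2 (by norm_num)
  have g7 := qPochInf_split (q^7) n14 2 (by norm_num)
  have g6 := qPochInf_split (q^6) n14 2 (by norm_num)
  have g8 := qPochInf_split (q^8) n14 2 (by norm_num)
  have g14 := qPochInf_split (q^14) n14 2 (by norm_num)
  have k := qPochInf_split (q^2) (norm_sq_lt hq) 14 (by norm_num)
  unfold Jam J
  simp only [Finset.prod_range_succ, Finset.prod_range_zero, one_mul] at e1 e2 e3 g1 g13 g7 g6 g8 g14 k
  norm_num [Even.neg_pow, ← pow_mul, ← pow_add, ← pow_succ, ← pow_succ'] at e1 e2 e3 f1 f13 f7 g1 g13 g7 g6 g8 g14 k ⊢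
  have a1 : q ^ 6 * (-q) ^ 7 = -q ^ 13 := by ring
  have a2 : qPochInf ((-q) ^ 7) (q ^ 14) = qPochInf (-q ^ 7) (q ^ 14) := by
    congr 1; ring
  rw [a1] at e1
  rw [a2] at e3
  rw [e1, e2, e3, k, g14, g6, g8]
  rw [g1] at f1
  rw [g13] at f13
  rw [g7] at f7
  clear e1 e2 e3 k g14 g6 g8 g1 g13 g7 a1 a2 n7 n14
  rw [← f1, ← f13]
  generalize qPochInf (q ^ 14) (q ^ 28) = p14 at *
  generalize qPochInf (q ^ 28) (q ^ 28) = p28 at *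
  subst f7
  ring

lemma eulerN_summable {q z : ℂ} (hq0 : q ≠ 0) (hq : ‖q‖ < 1) (hz : z ≠ 0) :
    Summable (fun n : ℕ => ‖q ^ tri n * z ^ (n:ℤ) * qI q n‖) :=
  (euler_summable hq0 hq hz).comp_injective (i := fun n : ℕ => (n:ℤ)) Nat.cast_injective

lemma eulerN {q z : ℂ} (hq0 : q ≠ 0) (hq : ‖q‖ < 1) (hz : z ≠ 0) :
    ∑' n : ℕ, q ^ tri n * z ^ (n:ℤ) * qI q n = qPochInf (-z) q := by
  rw [← euler hq0 hq hz]
  apply tsum_int_nat (fun n : ℤ => q ^ tri n * z ^ n * qI q n)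
  intro n hn
  rw [qI_neg q hn, mul_zero]

noncomputable def hh (q x : ℂ) : ℂ :=
  qPochInf (-x) (q^2) * (qPochInf (-(q^2/x)) (q^2) * qPochInf (-x⁻¹) (q^2))

noncomputable def eT (q z : ℂ) (n : ℕ) : ℂ := (q^2) ^ tri n * z ^ (n:ℤ) * qI (q^2) n

noncomputable def GG (q : ℂ) (l i j k : ℕ) : ℂ :=
  q ^ (l*l) * qI (q^2) l * (eT q (q^l) i * (eT q (q^2/q^l) j * eT q (q^l)⁻¹ k))

noncomputable def EE (l i j k : ℕ) : ℤ :=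
  ((i:ℤ)^2 + (j:ℤ)^2 + (k:ℤ)^2 + (l:ℤ)^2 + (i:ℤ)*(l:ℤ) - (j:ℤ)*(l:ℤ) - (k:ℤ)*(l:ℤ) - (i:ℤ) + (j:ℤ) - (k:ℤ))

lemma GG_eq {q : ℂ} (hq0 : q ≠ 0) (l i j k : ℕ) :
    GG q l i j k = q ^ EE l i j k * (qI (q^2) i * qI (q^2) j * qI (q^2) k * qI (q^2) l) := by
  have e : q ^ EE l i j k = q ^ (l*l) * (((q^2) ^ tri i * (q^l)^(i:ℤ)) *
    (((q^2) ^ tri j * (q^2/q^l)^(j:ℤ)) * ((q^2) ^ tri k * ((q^l)⁻¹)^(k:ℤ)))) := by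
    have e2 : q^2/q^l = q ^ (2 - (l:ℤ)) := by
      rw [zpow_sub₀ hq0]; norm_cast
    have e3 : (q^l)⁻¹ = q ^ (-(l:ℤ)) := by
      rw [zpow_neg]; norm_cast
    have e1 : q^l = q ^ (l:ℤ) := by norm_cast
    have e4 : q^2 = q ^ (2:ℤ) := by norm_cast
    have e5 : q^(l*l) = q ^ ((l:ℤ)*l) := by norm_cast
    rw [e2, e3, e1, e4, e5]
    simp only [← zpow_mul, ← zpow_add₀ hq0]
    congr 1
    have := two_tri i
    have := two_tri j
    have := two_tri k
    unfold EE
    linear_combination (- two_tri i) - two_tri j - two_tri k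
  rw [e]
  unfold GG eT
  ring

lemma EE_ge (l i j k : ℕ) : ((i:ℤ) + j + k + l) - 5 ≤ EE l i j k := by
  unfold EE
  have h : (0:ℤ) ≤ (i:ℤ) * l := by positivity
  nlinarith [sq_nonneg (2*(j:ℤ) - l), sq_nonneg (2*(k:ℤ) - l - 2), sq_nonneg ((l:ℤ)-2), sq_nonneg ((i:ℤ)-1)]

lemma GG_summable {q : ℂ} (hq0 : q ≠ 0) (hq : ‖q‖ < 1) :
    Summable (fun p : ℕ × (ℕ × (ℕ × ℕ)) => GG q p.1 p.2.1 p.2.2.1 p.2.2.2) := by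
  obtain ⟨C, hC, hb⟩ := qI_bdd (norm_sq_lt hq)
  have hn : 0 < ‖q‖ := norm_pos_iff.mpr hq0
  have g : Summable (fun n : ℕ => ‖q‖^n) := summable_geometric_of_lt_one (norm_nonneg _) hq
  have g0 : ∀ n : ℕ, 0 ≤ ‖q‖^n := fun n => by positivity
  have s2 := g.mul_of_nonneg g g0 g0
  have s3 := g.mul_of_nonneg s2 g0 (fun x => by positivity)
  have s4 := g.mul_of_nonneg s3 g0 (fun x => by positivity)
  refine Summable.of_norm_bounded (s4.mul_left (C^4 * ‖q‖^(-5:ℤ))) ?_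
  rintro ⟨l, i, j, k⟩
  simp only
  rw [GG_eq hq0]
  simp only [norm_mul, norm_zpow]
  have h1 : ‖q‖ ^ EE l i j k ≤ ‖q‖ ^ (((i:ℤ) + j + k + l) - 5) :=
    zpow_le_zpow_right_of_le_one₀ hn hq.le (EE_ge l i j k)
  have h2 : ‖q‖ ^ (((i:ℤ) + j + k + l) - 5) = ‖q‖^(-5:ℤ) * (‖q‖^l * (‖q‖^i * (‖q‖^j * ‖q‖^k))) := by
    simp only [← zpow_natCast, ← zpow_add₀ hn.ne']
    congr 1; ring
  calc _ ≤ (‖q‖^(-5:ℤ) * (‖q‖^l * (‖q‖^i * (‖q‖^j * ‖q‖^k)))) * (C * C * C * C) := by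
        rw [← h2]
        gcongr <;> apply hb
    _ = _ := by ring

lemma GG_inner {q : ℂ} (hq0 : q ≠ 0) (hq : ‖q‖ < 1) (l : ℕ) :
    ∑' r : ℕ × (ℕ × ℕ), GG q l r.1 r.2.1 r.2.2 = q ^ (l*l) * qI (q^2) l * hh q (q^l) := by
  have hQ0 : q^2 ≠ 0 := pow_ne_zero _ hq0
  have hQ := norm_sq_lt hq
  have z1 : q^l ≠ 0 := pow_ne_zero _ hq0
  have z2 : q^2/q^l ≠ 0 := div_ne_zero hQ0 z1
  have z3 : (q^l)⁻¹ ≠ 0 := inv_ne_zero z1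
  have s1 := eulerN_summable hQ0 hQ z1
  have s2 := eulerN_summable hQ0 hQ z2
  have s3 := eulerN_summable hQ0 hQ z3
  unfold GG hh
  rw [tsum_mul_left]
  congr 1
  rw [← eulerN hQ0 hQ z1, ← eulerN hQ0 hQ z2, ← eulerN hQ0 hQ z3]
  have m := tsum_mul_tsum_of_summable_norm s2 s3
  have m2 := tsum_mul_tsum_of_summable_norm s1 (s2.mul_norm s3)
  rw [m, m2]
  rfl

def reEq : (ℕ × (ℕ × (ℕ × ℕ))) ≃ (ℕ × ℕ × ℕ × ℕ) where
  toFun p := (p.2.1, p.2.2.1, p.2.2.2, p.1)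
  invFun p := (p.2.2.2, p.1, p.2.1, p.2.2.1)
  left_inv _ := rfl
  right_inv _ := rfl

lemma quad_summable {q : ℂ} (hq0 : q ≠ 0) (hq : ‖q‖ < 1) :
    Summable (fun l : ℕ => q ^ (l*l) * qI (q^2) l * hh q (q^l)) := by
  have h := (GG_summable hq0 hq).prod
  refine h.congr (fun l => ?_)
  exact GG_inner hq0 hq l

lemma quad_sum {q : ℂ} (hq0 : q ≠ 0) (hq : ‖q‖ < 1) :
    (∑' p : ℕ × ℕ × ℕ × ℕ,
      (fun (i j k l : ℕ) =>
        q ^ (((i:ℤ)^2 + (j:ℤ)^2 + (k:ℤ)^2 + (l:ℤ)^2 + (i:ℤ)*(l:ℤ) - (j:ℤ)*(l:ℤ) - (k:ℤ)*(l:ℤ) - (i:ℤ) + (j:ℤ) - (k:ℤ)) : ℤ) /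
          (qPoch (q ^ 2) (q ^ 2) i * qPoch (q ^ 2) (q ^ 2) j * qPoch (q ^ 2) (q ^ 2) k * qPoch (q ^ 2) (q ^ 2) l))
        p.1 p.2.1 p.2.2.1 p.2.2.2)
    = ∑' l : ℕ, q ^ (l*l) * qI (q^2) l * hh q (q^l) := by
  rw [← reEq.tsum_eq]
  have h := (GG_summable hq0 hq).tsum_prod
  simp only at h
  rw [tsum_congr (fun l => GG_inner hq0 hq l)] at h
  rw [← h]
  apply tsum_congr
  rintro ⟨l, i, j, k⟩
  simp only [reEq, Equiv.coe_fn_mk]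
  rw [GG_eq hq0]
  simp only [qI_nat, EE]
  rw [div_eq_mul_inv]
  simp only [mul_inv]

lemma hh_rec {q x : ℂ} (hq : ‖q‖ < 1) (hq0 : q ≠ 0) (hx : x ≠ 0) (hx1 : 1 + x ≠ 0) :
    (x^2 * q^2) * hh q (x * q^2) = (1 + x * q^2) * hh q x := by
  have hQ := norm_sq_lt hq
  have a1 := qPochInf_rec (-x) hQ
  have a2 := qPochInf_rec (-(x⁻¹)) hQ
  have a3 := qPochInf_rec (-(q^2/(x*q^2))) hQ
  have a4 := qPochInf_rec (-((x*q^2)⁻¹)) hQ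
  have r1 : -x⁻¹ * q^2 = -(q^2/x) := by field_simp
  have r2 : -(q^2/(x*q^2)) = -x⁻¹ := by field_simp
  have r4 : -((x*q^2)⁻¹) * q^2 = -x⁻¹ := by field_simp
  have r5 : -x * q^2 = -(x*q^2) := by ring
  rw [r1] at a2
  rw [r4] at a4
  rw [r5] at a1
  unfold hh
  rw [r2, a4, a1, a2]
  field_simp
  ring

lemma qPoch_succ_neg (a q : ℂ) (n : ℕ) : qPoch (-a) q (n+1) = qPoch (-a) q n * (1 + a * q^n) := by
  rw [qPoch_succ]; ring

lemma hh_even {q : ℂ} (hq0 : q ≠ 0) (hq : ‖q‖ < 1) (m : ℕ) :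
    q ^ ((2*m)*(2*m)) * hh q (q^(2*m)) =
      4 * qPochInf (-q^2) (q^2)^3 * (q^2)^(m*m) * qPoch (-q^2) (q^2) m := by
  have hQ := norm_sq_lt hq
  induction m with
  | zero =>
    have a := qPochInf_rec (-1) hQ
    unfold hh
    simp [qPoch_zero] at a ⊢
    rw [a]
    ring
  | succ m ih =>
    have hx : q^(2*m) ≠ 0 := pow_ne_zero _ hq0
    have hx1 : 1 + q^(2*m) ≠ 0 := by
      rcases Nat.eq_zero_or_pos m with rfl | hm
      · norm_num
      · intro h
        have : ‖q^(2*m)‖ < 1 := norm_pow_lt hq (by omega)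
        have h2 : q^(2*m) = -1 := by linear_combination h
        rw [h2] at this
        simp at this
    have r := hh_rec hq hq0 hx hx1
    rw [qPoch_succ_neg]
    have e : q^(2*(m+1)) = q^(2*m) * q^2 := by ring
    rw [e]
    have : q ^ ((2*(m+1))*(2*(m+1))) * hh q (q^(2*m)*q^2) =
       q ^ ((2*m)*(2*m)) * q^(4*m+2) * (((q^(2*m))^2 * q^2) * hh q (q^(2*m)*q^2)) := by ring
    rw [this, r]
    linear_combination (q^(4*m+2) * (1 + q^(2*m)*q^2)) * ih

lemma hh_odd {q : ℂ} (hq0 : q ≠ 0) (hq : ‖q‖ < 1) (m : ℕ) :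
    q ^ ((2*m+1)*(2*m+1)) * hh q (q^(2*m+1)) =
      qPochInf (-q) (q^2)^3 * (q^2)^(m*m+m) * qPoch (-q) (q^2) (m+1) := by
  have hQ := norm_sq_lt hq
  induction m with
  | zero =>
    have a := qPochInf_rec (-q⁻¹) hQ
    have r1 : -q⁻¹ * q^2 = -q := by field_simp
    have r2 : q^2/q = q := by field_simp
    unfold hh
    simp [qPoch_zero, qPoch_succ] at a ⊢
    rw [r2, a, show q⁻¹ * q^2 = q by field_simp]
    field_simp
    ring
  | succ m ih =>
    have hx : q^(2*m+1) ≠ 0 := pow_ne_zero _ hq0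
    have hx1 : 1 + q^(2*m+1) ≠ 0 := by
      intro h
      have : ‖q^(2*m+1)‖ < 1 := norm_pow_lt hq (by omega)
      have h2 : q^(2*m+1) = -1 := by linear_combination h
      rw [h2] at this
      simp at this
    have r := hh_rec hq hq0 hx hx1
    rw [qPoch_succ_neg]
    have e : q^(2*(m+1)+1) = q^(2*m+1) * q^2 := by ring
    rw [e]
    have : q ^ ((2*(m+1)+1)*(2*(m+1)+1)) * hh q (q^(2*m+1)*q^2) =
       q ^ ((2*m+1)*(2*m+1)) * q^(4*m+4) * (((q^(2*m+1))^2 * q^2) * hh q (q^(2*m+1)*q^2)) := by ring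
    rw [this, r]
    linear_combination (q^(4*m+4) * (1 + q^(2*m+1)*q^2)) * ih

lemma jtp_alt {b a : ℂ} (hb0 : b ≠ 0) (ha0 : a ≠ 0) (hb : ‖b‖ < 1) :
    ∑' r : ℤ, (-1)^r * (b ^ tri r * a ^ r) =
      qPochInf a b * qPochInf (b/a) b * qPochInf b b := by
  have := jtp hb0 hb (neg_ne_zero.mpr ha0)
  rw [neg_neg, div_neg, neg_neg] at this
  rw [← this]
  apply tsum_congr
  intro r
  rw [neg_eq_neg_one_mul a, mul_zpow]
  ring

lemma even_sum {q : ℂ} (hq0 : q ≠ 0) (hq : ‖q‖ < 1) :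
    ∑' m : ℕ, q ^ ((2*m)*(2*m)) * qI (q^2) (2*m:ℕ) * hh q (q^(2*m)) =
      4 * (J q 4)^3 * Jam q 12 28 / (J q 2)^4 := by
  have hQ0 : q^2 ≠ 0 := pow_ne_zero _ hq0
  have hQ := norm_sq_lt hq
  have h : ∀ m : ℕ, q ^ ((2*m)*(2*m)) * qI (q^2) (2*m:ℕ) * hh q (q^(2*m)) =
      4 * qPochInf (-q^2) (q^2)^3 * ((q^2)^(m*m) * (qPoch (-q^2) (q^2) m * qI (q^2) (2*m:ℕ))) := by
    intro m
    linear_combination (qI (q^2) (2*m:ℕ)) * hh_even hq0 hq m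
  rw [tsum_congr h, tsum_mul_left, slater61 hQ0 hQ]
  have e : ∀ r : ℤ, (-1:ℂ)^r * (q^2) ^ (((14:ℕ):ℤ)*tri r + 6*r) = (-1)^r * ((q^28)^tri r * (q^12)^r) := by
    intro r
    rw [zpow_add₀ hQ0, zpow_mul, zpow_mul, zpow_natCast, show (q^2)^(6:ℤ) = (q^2)^6 by norm_cast]
    simp only [← pow_mul]
  rw [tsum_congr e, jtp_alt (pow_ne_zero _ hq0) (pow_ne_zero _ hq0) (norm_pow_lt hq (by norm_num))]
  have d : q^28/q^12 = q^16 := by field_simp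
  rw [d]
  have pa := prod_A2 hq
  have j2 : J q 2 ≠ 0 := qPochInf_ne' hQ (by simpa using hQ)
  rw [← pa]
  unfold Jam
  have : qPochInf (q^2) (q^2) = J q 2 := rfl
  rw [this]
  norm_num
  field_simp

lemma odd_sum {q : ℂ} (hq0 : q ≠ 0) (hq : ‖q‖ < 1) :
    ∑' m : ℕ, q ^ ((2*m+1)*(2*m+1)) * qI (q^2) (2*m+1:ℕ) * hh q (q^(2*m+1)) =
      (J q 2)^6 * J q 14 * (J q 28)^5 /
        ((J q 1)^3 * (J q 4)^3 * Jam q 1 28 * Jam q 4 28 * Jam q 7 28 *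
          Jam q 10 28 * Jam q 12 28 * Jam q 13 28) := by
  have hQ0 : q^2 ≠ 0 := pow_ne_zero _ hq0
  have hQ := norm_sq_lt hq
  have hw0 : -q ≠ 0 := neg_ne_zero.mpr hq0
  have hw : ‖-q‖ < 1 := by rwa [norm_neg]
  have h : ∀ m : ℕ, q ^ ((2*m+1)*(2*m+1)) * qI (q^2) (2*m+1:ℕ) * hh q (q^(2*m+1)) =
      qPochInf (-q) (q^2)^3 * (((-q)^2)^(m*m+m) * (qPoch (-q) ((-q)^2) (m+1) * qI ((-q)^2) (2*m+1:ℕ))) := by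
    intro m
    rw [neg_sq]
    linear_combination (qI (q^2) (2*m+1:ℕ)) * hh_odd hq0 hq m
  rw [tsum_congr h, tsum_mul_left, rogersSelberg hw0 hw]
  have e : ∀ r : ℤ, (-1:ℂ)^r * (-q) ^ (((7:ℕ):ℤ)*tri r + 6*r) = (-1)^r * (((-q)^7)^tri r * ((-q)^6)^r) := by
    intro r
    rw [zpow_add₀ hw0, zpow_mul, zpow_mul, zpow_natCast, show (-q)^(6:ℤ) = (-q)^6 by norm_cast]
  rw [tsum_congr e, jtp_alt (pow_ne_zero _ hw0) (pow_ne_zero _ hw0) (norm_pow_lt hw (by norm_num))]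
  have d : (-q)^7/(-q)^6 = -q := by field_simp
  rw [d, neg_sq]
  have pa := prod_A1 hq
  have pt := prod_T hq
  have jn : ∀ m : ℕ, m ≠ 0 → J q m ≠ 0 := fun m hm =>
    qPochInf_ne' (norm_pow_lt hq hm) (norm_pow_lt hq hm)
  have jan : ∀ a : ℕ, a ≠ 0 → 28 - a ≠ 0 → Jam q a 28 ≠ 0 := fun a ha hb =>
    mul_ne_zero (mul_ne_zero (qPochInf_ne' (norm_pow_lt hq (by norm_num)) (norm_pow_lt hq ha))
      (qPochInf_ne' (norm_pow_lt hq (by norm_num)) (norm_pow_lt hq hb))) (jn 28 (by norm_num))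
  have j1 := jn 1 (by norm_num)
  have j2 := jn 2 (by norm_num)
  have j4 := jn 4 (by norm_num)
  have b1 := jan 1 (by norm_num) (by norm_num)
  have b4 := jan 4 (by norm_num) (by norm_num)
  have b7 := jan 7 (by norm_num) (by norm_num)
  have b10 := jan 10 (by norm_num) (by norm_num)
  have b12 := jan 12 (by norm_num) (by norm_num)
  have b13 := jan 13 (by norm_num) (by norm_num)
  have : qPochInf (q^2) (q^2) = J q 2 := rfl
  rw [this, eq_div_iff (by simp [*])]
  have j6 : J q 2 ^ 6 = (qPochInf (-q) (q^2) * J q 1 * J q 4)^3 := by rw [pa]; ring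
  rw [j6]
  generalize qPochInf ((-q)^6) ((-q)^7) * qPochInf (-q) ((-q)^7) * qPochInf ((-q)^7) ((-q)^7) = T at *
  have : J q 14 * J q 28 ^ 5 = (J q 2)⁻¹ * (T * (Jam q 1 28 * Jam q 4 28 * Jam q 7 28 * Jam q 10 28 * Jam q 12 28 * Jam q 13 28)) := by
    rw [pt]; field_simp
  rw [mul_assoc _ (J q 14), this]
  ring


theorem stmt_16 (q : ℂ) (h0 : 0 < ‖q‖) (h1 : ‖q‖ < 1) :
    (∑' p : ℕ × ℕ × ℕ × ℕ,
      (fun (i j k l : ℕ) =>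
        q ^ (((i:ℤ)^2 + (j:ℤ)^2 + (k:ℤ)^2 + (l:ℤ)^2 + (i:ℤ)*(l:ℤ) - (j:ℤ)*(l:ℤ) - (k:ℤ)*(l:ℤ) - (i:ℤ) + (j:ℤ) - (k:ℤ)) : ℤ) /
          (qPoch (q ^ 2) (q ^ 2) i * qPoch (q ^ 2) (q ^ 2) j * qPoch (q ^ 2) (q ^ 2) k * qPoch (q ^ 2) (q ^ 2) l))
        p.1 p.2.1 p.2.2.1 p.2.2.2)
    = 4 * (J q 4)^3 * Jam q 12 28 / (J q 2)^4
      + (J q 2)^6 * J q 14 * (J q 28)^5 /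
        ((J q 1)^3 * (J q 4)^3 * Jam q 1 28 * Jam q 4 28 * Jam q 7 28 *
          Jam q 10 28 * Jam q 12 28 * Jam q 13 28) := by
  have hq0 : q ≠ 0 := norm_pos_iff.mp h0
  have s := quad_summable hq0 h1
  rw [quad_sum hq0 h1, ← even_sum hq0 h1, ← odd_sum hq0 h1]
  generalize hf : (fun l : ℕ => q ^ (l*l) * qI (q^2) l * hh q (q^l)) = f at s
  have hf2 : ∀ l : ℕ, q ^ (l*l) * qI (q^2) l * hh q (q^l) = f l := fun l => by rw [← hf]
  simp only [hf2]
  symm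
  exact tsum_even_add_odd (f := f)
    (s.comp_injective (i := fun k : ℕ => 2 * k) (fun a b h => by simpa using h))
    (s.comp_injective (i := fun k : ℕ => 2 * k + 1) (fun a b h => by simpa using h))
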